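/- Let S = ⟨S, δ, L⟩ and S' = ⟨S', δ', L'⟩ be FLTSs that are witnessed and modally saturated w.r.t. f∃ΔK^0, and let x ∈ S, x' ∈ S'. Then there exists a crisp simulation Z between S and S' with Z(x,x') if and only if φ^S(x) ≤ φ^S'(x') for all formulas φ of f∃ΔK^0. -/

import Mathlib

open unitInterval

noncomputable section
attribute [local instance] Classical.propDecidable

instance : Fact ((0:ℝ) ≤ 1) := ⟨zero_le_one⟩

/-- A left-continuous t-norm on the unit interval `[0,1]`: a commutative, associative
binary operation with neutral element `1`, increasing in both arguments, that
distributes over suprema of nonempty sets (left-continuity). -/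
structure Tnorm where
  mul : I → I → I
  mul_comm : ∀ x y, mul x y = mul y x
  mul_assoc : ∀ x y z, mul (mul x y) z = mul x (mul y z)
  mul_one : ∀ x, mul x 1 = x
  mul_le_mul : ∀ {a b c d : I}, a ≤ b → c ≤ d → mul a c ≤ mul b d
  left_continuous : ∀ (x : I) (s : Set I), s.Nonempty → mul x (sSup s) = sSup (mul x '' s)

/-- The residuum of a t-norm: `(x ⇒ y) = sup {z | z ⊗ x ≤ y}`. -/
def Tnorm.res (T : Tnorm) (x y : I) : I := sSup {z : I | T.mul z x ≤ y}

/-- A fuzzy labeled transition system over actions `A`, propositions `P`, states `St`. -/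
structure FLTS (A P St : Type) where
  delta : St → A → St → I
  label : St → P → I

/-- A crisp simulation between two FLTSs. -/
def IsSimulation {A P S S' : Type} (M : FLTS A P S) (M' : FLTS A P S')
    (Z : S → S' → Prop) : Prop :=
  (∀ x x', Z x x' → ∀ p, M.label x p ≤ M'.label x' p) ∧
  (∀ x y x' (ρ : A), Z x x' → 0 < M.delta x ρ y →
    ∃ y', M.delta x ρ y ≤ M'.delta x' ρ y' ∧ Z y y')

/-- Formulas of f∃ΔK^0. -/
inductive KForm (A P : Type) : Type
  | prop : P → KForm A P
  | baaz : KForm A P → KForm A P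
  | and : KForm A P → KForm A P → KForm A P
  | impl : I → KForm A P → KForm A P
  | dia : A → KForm A P → KForm A P

/-- Semantics of f∃ΔK^0 formulas. -/
def kSem (T : Tnorm) {A P St : Type} (M : FLTS A P St) : KForm A P → St → I
  | .prop p, x => M.label x p
  | .baaz φ, x => if kSem T M φ x = 1 then 1 else 0
  | .and φ ψ, x => min (kSem T M φ x) (kSem T M ψ x)
  | .impl a φ, x => T.res a (kSem T M φ x)
  | .dia ρ φ, x => ⨆ y, T.mul (M.delta x ρ y) (kSem T M φ y)

/-- An FLTS is witnessed w.r.t. f∃ΔK^0: the supremum in the semantic clause for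
`⟨ϱ⟩φ` is always attained by a greatest element. -/
def WitnessedK (T : Tnorm) {A P St : Type} (M : FLTS A P St) : Prop :=
  ∀ (φ : KForm A P) (ρ : A) (x : St), ∃ y : St, ∀ z : St,
    T.mul (M.delta x ρ z) (kSem T M φ z) ≤ T.mul (M.delta x ρ y) (kSem T M φ y)

/-- An FLTS is modally saturated w.r.t. f∃ΔK^0. Here `Ψ.inf (fun φ => kSem T M φ y)`
is the value of the conjunction `⋀Ψ` at `y` (the empty conjunction has value `1 = ⊤`). -/
def ModallySaturated (T : Tnorm) {A P St : Type} (M : FLTS A P St) : Prop :=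
  ∀ (x : St) (a : I) (ρ : A) (Γ : Set (KForm A P)), 0 < a → Γ.Infinite →
    (∀ Ψ : Finset (KForm A P), ↑Ψ ⊆ Γ →
      ∃ y : St, a ≤ T.mul (M.delta x ρ y) (Ψ.inf fun φ => kSem T M φ y)) →
    ∃ y : St, a ≤ M.delta x ρ y ∧ ∀ φ ∈ Γ, 0 < kSem T M φ y

theorem Tnorm.res_mono (T : Tnorm) (a : I) {b c : I} (h : b ≤ c) : T.res a b ≤ T.res a c :=
  sSup_le_sSup fun _ hz => le_trans hz h

theorem Tnorm.zero_mul' (T : Tnorm) (b : I) : T.mul 0 b = 0 := by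
  apply le_antisymm _ (unitInterval.nonneg' )
  calc T.mul 0 b ≤ T.mul 0 1 := T.mul_le_mul le_rfl unitInterval.le_one'
    _ = 0 := T.mul_one 0

theorem Tnorm.one_mul' (T : Tnorm) (b : I) : T.mul 1 b = b := by
  rw [T.mul_comm, T.mul_one]

theorem Tnorm.le_of_res (T : Tnorm) {b c : I} (h : T.res b c = 1) : b ≤ c := by
  have hne : {z : I | T.mul z b ≤ c}.Nonempty := by
    refine ⟨0, ?_⟩
    change T.mul 0 b ≤ c
    rw [T.zero_mul']
    exact unitInterval.nonneg'
  have h2 := T.left_continuous b _ hne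
  unfold Tnorm.res at h
  rw [h, T.mul_one] at h2
  rw [h2]
  apply sSup_le
  rintro _ ⟨z, hz, rfl⟩
  rw [T.mul_comm]
  exact hz

theorem Tnorm.res_self (T : Tnorm) (b : I) : T.res b b = 1 := by
  apply le_antisymm unitInterval.le_one'
  apply le_sSup
  change T.mul 1 b ≤ b
  rw [T.one_mul']

theorem sim_mono {A P S S' : Type} (T : Tnorm) (M : FLTS A P S) (M' : FLTS A P S')
    (Z : S → S' → Prop) (hZ : IsSimulation M M' Z) (φ : KForm A P) :
    ∀ x x', Z x x' → kSem T M φ x ≤ kSem T M' φ x' := by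
  induction φ with
  | prop p => exact fun x x' h => hZ.1 x x' h p
  | baaz φ ih =>
    intro x x' h
    have := ih x x' h
    simp only [kSem]
    split_ifs with h1 h2
    · exact le_rfl
    · exact absurd (le_antisymm unitInterval.le_one' (h1 ▸ this)) h2
    · exact unitInterval.nonneg'
    · exact le_rfl
  | and φ ψ ih1 ih2 => exact fun x x' h => min_le_min (ih1 x x' h) (ih2 x x' h)
  | impl a φ ih => exact fun x x' h => T.res_mono a (ih x x' h)
  | dia ρ φ ih =>
    intro x x' h
    simp only [kSem]
    apply iSup_le
    intro y
    by_cases h0 : 0 < M.delta x ρ y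
    · obtain ⟨y', h1, h2⟩ := hZ.2 x y x' ρ h h0
      exact le_trans (T.mul_le_mul h1 (ih y y' h2))
        (le_iSup (fun y' => T.mul (M'.delta x' ρ y') (kSem T M' φ y')) y')
    · have : M.delta x ρ y = 0 := le_antisymm (not_lt.mp h0) unitInterval.nonneg'
      rw [this, T.zero_mul']
      exact unitInterval.nonneg'

instance {A P : Type} [Nonempty P] : Infinite (KForm A P) := by
  obtain ⟨p⟩ := ‹Nonempty P›
  haveI : Infinite I := (Set.Icc_infinite (zero_lt_one (α := ℝ))).to_subtype
  refine Infinite.of_injective (fun a : I => (KForm.impl a (KForm.prop p) : KForm A P)) ?_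
  intro a b h
  injection h

/-- The characteristic formula expressing that the value of `φ` is at least its value at `y`. -/
def charForm (T : Tnorm) {A P S : Type} (M : FLTS A P S) (y : S) (φ : KForm A P) : KForm A P :=
  .baaz (.impl (kSem T M φ y) φ)

theorem charForm_self (T : Tnorm) {A P S : Type} (M : FLTS A P S) (y : S) (φ : KForm A P) :
    kSem T M (charForm T M y φ) y = 1 := by
  simp [charForm, kSem, T.res_self]

theorem exists_conj (T : Tnorm) {A P S S' : Type} [Nonempty P] (M : FLTS A P S)
    (M' : FLTS A P S') (y : S) (Ψ : Finset (KForm A P)) :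
    (↑Ψ ⊆ Set.range (charForm T M y)) →
    ∃ χ : KForm A P, kSem T M χ y = 1 ∧ ∀ z, kSem T M' χ z ≤ Ψ.inf fun φ => kSem T M' φ z := by
  induction Ψ using Finset.induction_on with
  | empty =>
    intro _
    obtain ⟨p⟩ := ‹Nonempty P›
    exact ⟨_, charForm_self T M y (.prop p), fun z => by simp⟩
  | insert φ Ψ _ ih =>
    intro h
    obtain ⟨χ, h1, h2⟩ := ih fun ψ hψ => h (by simp at hψ; simp [hψ])
    obtain ⟨φ', rfl⟩ := h (show φ ∈ _ by simp)
    refine ⟨.and (charForm T M y φ') χ, ?_, fun z => ?_⟩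
    · simp only [kSem]
      rw [charForm_self, h1, min_self]
    · rw [Finset.inf_insert]
      exact min_le_min le_rfl (h2 z)

/-- For FLTSs witnessed and modally saturated w.r.t. f∃ΔK^0, a state `x'` simulates
`x` iff `x'` satisfies all f∃ΔK^0 formulas at least as much as `x` does. -/
theorem simulation_iff_feK0
    {A P S S' : Type} [Nonempty A] [Nonempty P] [Nonempty S] [Nonempty S']
    (T : Tnorm) (M : FLTS A P S) (M' : FLTS A P S')
    (hwM : WitnessedK T M) (hwM' : WitnessedK T M')
    (hsM : ModallySaturated T M) (hsM' : ModallySaturated T M')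
    (x : S) (x' : S') :
    (∃ Z : S → S' → Prop, IsSimulation M M' Z ∧ Z x x') ↔
      (∀ φ : KForm A P, kSem T M φ x ≤ kSem T M' φ x') := by
  constructor
  · rintro ⟨Z, hZ, h⟩ φ
    exact sim_mono T M M' Z hZ φ x x' h
  · intro hx
    refine ⟨fun x x' => ∀ φ : KForm A P, kSem T M φ x ≤ kSem T M' φ x', ⟨?_, ?_⟩, hx⟩
    · exact fun x x' h p => h (.prop p)
    · intro x y x' ρ h h0
      obtain ⟨y', h1, h2⟩ := hsM' x' (M.delta x ρ y) ρ (Set.range (charForm T M y)) h0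
        (Set.infinite_range_of_injective (by
          intro φ ψ e
          simp only [charForm] at e
          injection e with e
          injection e)) (by
        intro Ψ hΨ
        obtain ⟨χ, h1, h2⟩ := exists_conj T M M' y Ψ hΨ
        obtain ⟨y', hy'⟩ := hwM' χ ρ x'
        refine ⟨y', ?_⟩
        calc M.delta x ρ y = T.mul (M.delta x ρ y) (kSem T M χ y) := by rw [h1, T.mul_one]
          _ ≤ kSem T M (.dia ρ χ) x :=
            le_iSup (fun y => T.mul (M.delta x ρ y) (kSem T M χ y)) y
          _ ≤ kSem T M' (.dia ρ χ) x' := h _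
          _ ≤ T.mul (M'.delta x' ρ y') (kSem T M' χ y') := iSup_le hy'
          _ ≤ _ := T.mul_le_mul le_rfl (h2 y'))
      refine ⟨y', h1, fun φ => T.le_of_res ?_⟩
      have := h2 _ ⟨φ, rfl⟩
      by_contra hc
      have h3 : kSem T M' (charForm T M y φ) y' = 0 := if_neg hc
      rw [h3] at this
      exact lt_irrefl _ this
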